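/- arXiv:math/9204212 — 2 statements merged into one kernel-verified Lean document; each statement's English description precedes it below -/
import Mathlib

section
/- Let K be a convex body in ℝⁿ with 0 in its interior, τ > 0, and 0 < δ < min(1, τⁿ)·vol(K). Then the convolution body K(δ,τ) = {x ∈ ℝⁿ : vol(K ∩ (x + τK)) ≥ δ} is a convex body (compact, convex, with nonempty interior); moreover, if K is centrally symmetric then so is K(δ,τ). -/
open MeasureTheory Set
open scoped Pointwise

/-!
Convexity of the convolution body is the statement that `x ↦ vol (K ∩ (x + τK))` is quasiconcave.
Since `a (K ∩ (x + τK)) + b (K ∩ (y + τK)) ⊆ K ∩ (ax + by + τK)` for weights `a + b = 1`, it follows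
from the multiplicative Brunn–Minkowski inequality `vol A ^ a * vol B ^ b ≤ vol (aA + bB)`, which is
the case of indicator functions in the Prékopa–Leindler inequality. The latter tensorizes over
products, so it only has to be proved on the line, where it reduces to `|A + B| ≥ |A| + |B|` for
superlevel sets.

The condition that a compact set `C` lies in the translate `x + V` of an open set is open in `x`.
Hence `x ↦ vol (K ∩ (x + τK))` is upper semicontinuous, which gives compactness, and its analogue
for `interior K` is lower semicontinuous, which turns the superlevel set of `δ` into a neighbourhood
of `(1 - τ)c` for every `c ∈ interior K`: there the two bodies are homothetic images of each other
with centre `c`, so that they share the copy of `K` scaled by `min 1 τ`.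
-/

open scoped ENNReal
open Module (finrank)

theorem volume_add_volume_le_volume_add_of_isCompact {A B : Set ℝ} (hA : IsCompact A)
    (hB : IsCompact B) (hA₀ : A.Nonempty) (hB₀ : B.Nonempty) :
    volume A + volume B ≤ volume (A + B) := by
  obtain ⟨p, hp, hpA⟩ := hA.exists_isGreatest hA₀
  obtain ⟨q, hq, hqB⟩ := hB.exists_isLeast hB₀
  -- The translates `A + q` and `p + B` lie in `A + B` and meet at most at `p + q`.
  have h_disj : AEDisjoint volume ((fun x ↦ x + q) '' A) ((fun x ↦ p + x) '' B) := by
    refine measure_mono_null (t := {p + q}) ?_ (by simp)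
    rintro _ ⟨⟨x, hx, rfl⟩, y, hy, hxy⟩
    have hxp : x ≤ p := hpA hx
    have hqy : q ≤ y := hqB hy
    simp only [mem_singleton_iff] at hxy ⊢
    linarith
  calc volume A + volume B
      = volume ((fun x ↦ x + q) '' A) + volume ((fun x ↦ p + x) '' B) := by simp
    _ = volume ((fun x ↦ x + q) '' A ∪ (fun x ↦ p + x) '' B) :=
      (measure_union₀ (hB.image (by fun_prop)).measurableSet.nullMeasurableSet h_disj).symm
    _ ≤ volume (A + B) := by
      refine measure_mono (union_subset ?_ ?_)
      · exact image_subset_iff.2 fun x hx ↦ add_mem_add hx hq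
      · exact image_subset_iff.2 fun y hy ↦ add_mem_add hp hy

theorem volume_add_volume_le_volume_add {A B : Set ℝ} (hA : MeasurableSet A)
    (hB : MeasurableSet B) (hA₀ : A.Nonempty) (hB₀ : B.Nonempty) :
    volume A + volume B ≤ volume (A + B) := by
  obtain ⟨x, hx⟩ := hA₀
  obtain ⟨y, hy⟩ := hB₀
  rw [hA.measure_eq_iSup_isCompact, hB.measure_eq_iSup_isCompact]
  simp only [iSup_and']
  refine ENNReal.biSup_add_biSup_le' ⟨∅, by simp⟩ ⟨∅, by simp⟩ ?_
  rintro S ⟨hSA, hS⟩ T ⟨hTB, hT⟩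
  calc volume S + volume T
      ≤ volume (insert x S) + volume (insert y T) := by gcongr <;> exact subset_insert _ _
    _ ≤ volume (insert x S + insert y T) :=
      volume_add_volume_le_volume_add_of_isCompact (hS.insert x) (hT.insert y)
        (insert_nonempty _ _) (insert_nonempty _ _)
    _ ≤ volume (A + B) :=
      measure_mono (add_subset_add (insert_subset hx hSA) (insert_subset hy hTB))

section Lintegral

variable {α : Type*} [MeasurableSpace α]

theorem volume_restrict_Ioi_setOf_ofReal_lt (y : ℝ≥0∞) :
    volume.restrict (Ioi 0) {t : ℝ | ENNReal.ofReal t < y} = y := by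
  rw [Measure.restrict_apply (measurableSet_lt (by fun_prop) measurable_const)]
  induction y with
  | top => simp
  | coe y =>
    have h_Ioo : {t : ℝ | ENNReal.ofReal t < y} ∩ Ioi 0 = Ioo 0 (y : ℝ) := by
      ext t
      simp only [mem_inter_iff, mem_ofPred_eq, mem_Ioi, mem_Ioo, and_comm (b := 0 < t)]
      refine and_congr_right fun ht ↦ ?_
      rw [ENNReal.ofReal_lt_iff_lt_toReal ht.le ENNReal.coe_ne_top, ENNReal.coe_toReal]
    simp [h_Ioo]

theorem lintegral_eq_lintegral_measure_superlevel (μ : Measure α) [SFinite μ] {f : α → ℝ≥0∞}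
    (hf : Measurable f) :
    ∫⁻ x, f x ∂μ = ∫⁻ t in Ioi (0 : ℝ), μ {x | ENNReal.ofReal t < f x} := by
  have h_meas : MeasurableSet {p : α × ℝ | ENNReal.ofReal p.2 < f p.1} :=
    measurableSet_lt (by fun_prop) (by fun_prop)
  calc ∫⁻ x, f x ∂μ
      = ∫⁻ x, volume.restrict (Ioi 0) {t : ℝ | ENNReal.ofReal t < f x} ∂μ := by
        simp only [volume_restrict_Ioi_setOf_ofReal_lt]
    _ = μ.prod (volume.restrict (Ioi 0)) {p : α × ℝ | ENNReal.ofReal p.2 < f p.1} :=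
        (Measure.prod_apply h_meas).symm
    _ = ∫⁻ t in Ioi (0 : ℝ), μ {x | ENNReal.ofReal t < f x} := Measure.prod_apply_symm h_meas

theorem measurable_measure_superlevel (μ : Measure α) (f : α → ℝ≥0∞) :
    Measurable fun t : ℝ ↦ μ {x | ENNReal.ofReal t < f x} :=
  Antitone.measurable fun _ _ hst ↦ measure_mono fun _ hx ↦
    (ENNReal.ofReal_le_ofReal hst).trans_lt hx

theorem lintegral_eq_iSup_lintegral_min_natCast (μ : Measure α) {f : α → ℝ≥0∞}
    (hf : Measurable f) :
    ∫⁻ x, f x ∂μ = ⨆ n : ℕ, ∫⁻ x, min (f x) n ∂μ := by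
  rw [← lintegral_iSup (fun n ↦ hf.min measurable_const)
    (fun m n hmn x ↦ min_le_min_left _ (by exact_mod_cast hmn))]
  congr with x
  rw [← inf_iSup_eq, ENNReal.iSup_natCast, inf_top_eq]

end Lintegral

section PrekopaLeindler

variable {a b : ℝ}

/-- The measure `μ` satisfies the Prékopa–Leindler inequality with weights `a` and `b`. Isolating
this property from the particular measure makes it possible to transport it along products and
linear maps. -/
def PrekopaLeindler (a b : ℝ) {E : Type*} [AddCommGroup E] [Module ℝ E] [MeasurableSpace E]
    (μ : Measure E) : Prop :=
  ∀ f g h : E → ℝ≥0∞, Measurable f → Measurable g → Measurable h →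
    (∀ x y, f x ^ a * g y ^ b ≤ h (a • x + b • y)) →
      (∫⁻ x, f x ∂μ) ^ a * (∫⁻ x, g x ∂μ) ^ b ≤ ∫⁻ x, h x ∂μ

theorem ennreal_rpow_mul_rpow_le_weighted_add (ha : 0 < a) (hb : 0 < b) (hab : a + b = 1)
    (x y : ℝ≥0∞) :
    x ^ a * y ^ b ≤ ENNReal.ofReal a * x + ENNReal.ofReal b * y := by
  have h_young := ENNReal.young_inequality (x ^ a) (y ^ b) (Real.HolderConjugate.inv_inv ha hb hab)
  rwa [ENNReal.rpow_rpow_inv ha.ne', ENNReal.rpow_rpow_inv hb.ne', ENNReal.ofReal_inv_of_pos ha,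
    ENNReal.ofReal_inv_of_pos hb, ENNReal.div_eq_inv_mul, ENNReal.div_eq_inv_mul, inv_inv,
    inv_inv] at h_young

theorem ennreal_rpow_mul_rpow_self (ha : 0 < a) (hb : 0 < b) (hab : a + b = 1) (x : ℝ≥0∞) :
    x ^ a * x ^ b = x := by
  rw [← ENNReal.rpow_add_of_nonneg _ _ ha.le hb.le, hab, ENNReal.rpow_one]

theorem ennreal_mul_rpow_mul_mul_rpow (ha : 0 ≤ a) (hb : 0 ≤ b) (c d x y : ℝ≥0∞) :
    (c * x) ^ a * (d * y) ^ b = c ^ a * d ^ b * (x ^ a * y ^ b) := by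
  rw [ENNReal.mul_rpow_of_nonneg _ _ ha, ENNReal.mul_rpow_of_nonneg _ _ hb]
  ring

theorem weighted_volume_superlevel_le {f g h : ℝ → ℝ≥0∞} (ha : 0 < a) (hb : 0 < b)
    (hab : a + b = 1) (hf : Measurable f) (hg : Measurable g) (h_sup : ⨆ x, f x = ⨆ x, g x)
    (hfgh : ∀ x y, f x ^ a * g y ^ b ≤ h (a • x + b • y)) (t : ℝ≥0∞) :
    ENNReal.ofReal a * volume {x | t < f x} + ENNReal.ofReal b * volume {x | t < g x} ≤
      volume {x | t < h x} := by
  rcases le_or_gt (⨆ x, f x) t with ht | ht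
  · have hf_empty : {x | t < f x} = ∅ :=
      eq_empty_of_forall_notMem fun x ↦ ((le_iSup f x).trans ht).not_gt
    have hg_empty : {x | t < g x} = ∅ :=
      eq_empty_of_forall_notMem fun x ↦ ((le_iSup g x).trans (h_sup ▸ ht)).not_gt
    simp [hf_empty, hg_empty]
  have hf₀ : {x | t < f x}.Nonempty := lt_iSup_iff.1 ht
  have hg₀ : {x | t < g x}.Nonempty := lt_iSup_iff.1 (ht.trans_eq h_sup)
  calc ENNReal.ofReal a * volume {x | t < f x} + ENNReal.ofReal b * volume {x | t < g x}
      = volume (a • {x | t < f x}) + volume (b • {x | t < g x}) := by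
        simp [Measure.addHaar_smul, abs_of_pos, ha, hb]
    _ ≤ volume (a • {x | t < f x} + b • {x | t < g x}) :=
        volume_add_volume_le_volume_add ((measurableSet_lt measurable_const hf).const_smul₀ a)
          ((measurableSet_lt measurable_const hg).const_smul₀ b) hf₀.smul_set hg₀.smul_set
    _ ≤ volume {x | t < h x} := by
        refine measure_mono ?_
        rintro _ ⟨_, ⟨x, hx, rfl⟩, _, ⟨y, hy, rfl⟩, rfl⟩
        calc t = t ^ a * t ^ b := (ennreal_rpow_mul_rpow_self ha hb hab t).symm
          _ < f x ^ a * g y ^ b :=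
            ENNReal.mul_lt_mul (ENNReal.rpow_lt_rpow hx ha) (ENNReal.rpow_lt_rpow hy hb)
          _ ≤ h (a • x + b • y) := hfgh x y

theorem weighted_lintegral_le_of_iSup_eq {f g h : ℝ → ℝ≥0∞} (ha : 0 < a) (hb : 0 < b)
    (hab : a + b = 1) (hf : Measurable f) (hg : Measurable g) (hh : Measurable h)
    (h_sup : ⨆ x, f x = ⨆ x, g x) (hfgh : ∀ x y, f x ^ a * g y ^ b ≤ h (a • x + b • y)) :
    ENNReal.ofReal a * (∫⁻ x, f x) + ENNReal.ofReal b * ∫⁻ x, g x ≤ ∫⁻ x, h x := by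
  have hf_meas := measurable_measure_superlevel volume f
  have hg_meas := measurable_measure_superlevel volume g
  rw [lintegral_eq_lintegral_measure_superlevel _ hf,
    lintegral_eq_lintegral_measure_superlevel _ hg,
    lintegral_eq_lintegral_measure_superlevel _ hh, ← lintegral_const_mul _ hf_meas,
    ← lintegral_const_mul _ hg_meas, ← lintegral_add_left (hf_meas.const_mul _)]
  exact lintegral_mono fun t ↦ weighted_volume_superlevel_le ha hb hab hf hg h_sup hfgh _

theorem lintegral_rpow_mul_lintegral_rpow_le_of_iSup_ne_top {f g h : ℝ → ℝ≥0∞} (ha : 0 < a)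
    (hb : 0 < b) (hab : a + b = 1) (hf : Measurable f) (hg : Measurable g) (hh : Measurable h)
    (hf_top : ⨆ x, f x ≠ ⊤) (hg_top : ⨆ x, g x ≠ ⊤)
    (hfgh : ∀ x y, f x ^ a * g y ^ b ≤ h (a • x + b • y)) :
    (∫⁻ x, f x) ^ a * (∫⁻ x, g x) ^ b ≤ ∫⁻ x, h x := by
  rcases eq_or_ne (⨆ x, f x) 0 with hf₀ | hf₀
  · simp [ENNReal.iSup_eq_zero.1 hf₀, ha]
  rcases eq_or_ne (⨆ x, g x) 0 with hg₀ | hg₀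
  · simp [ENNReal.iSup_eq_zero.1 hg₀, hb]
  set F := ⨆ x, f x
  set G := ⨆ x, g x
  -- The inequality is homogeneous, so `f` and `g` may be normalized to have supremum `1`.
  have h_sup : ⨆ x, F⁻¹ * f x = ⨆ x, G⁻¹ * g x := by
    rw [← ENNReal.mul_iSup, ← ENNReal.mul_iSup, ENNReal.inv_mul_cancel hf₀ hf_top,
      ENNReal.inv_mul_cancel hg₀ hg_top]
  have h_normalized : (F⁻¹ ^ a * G⁻¹ ^ b) * ((∫⁻ x, f x) ^ a * (∫⁻ x, g x) ^ b) ≤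
      (F⁻¹ ^ a * G⁻¹ ^ b) * ∫⁻ x, h x := by
    rw [← ennreal_mul_rpow_mul_mul_rpow ha.le hb.le, ← lintegral_const_mul _ hf,
      ← lintegral_const_mul _ hg, ← lintegral_const_mul _ hh]
    refine (ennreal_rpow_mul_rpow_le_weighted_add ha hb hab _ _).trans
      (weighted_lintegral_le_of_iSup_eq ha hb hab (hf.const_mul _) (hg.const_mul _)
        (hh.const_mul _) h_sup fun x y ↦ ?_)
    rw [ennreal_mul_rpow_mul_mul_rpow ha.le hb.le]
    gcongr
    exact hfgh x y
  refine (ENNReal.mul_le_mul_iff_right (mul_ne_zero ?_ ?_) (ENNReal.mul_ne_top ?_ ?_)).1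
    h_normalized
  · simp [ENNReal.rpow_eq_zero_iff, hf_top, hf₀]
  · simp [ENNReal.rpow_eq_zero_iff, hg_top, hg₀]
  · exact ENNReal.rpow_ne_top_of_nonneg ha.le (by simpa using hf₀)
  · exact ENNReal.rpow_ne_top_of_nonneg hb.le (by simpa using hg₀)

theorem prekopaLeindler_real (ha : 0 < a) (hb : 0 < b) (hab : a + b = 1) :
    PrekopaLeindler a b (volume : Measure ℝ) := by
  intro f g h hf hg hh hfgh
  have h_truncated (m n : ℕ) :
      (∫⁻ x, min (f x) m) ^ a * (∫⁻ x, min (g x) n) ^ b ≤ ∫⁻ x, h x := by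
    refine lintegral_rpow_mul_lintegral_rpow_le_of_iSup_ne_top ha hb hab (hf.min measurable_const)
      (hg.min measurable_const) hh ?_ ?_ fun x y ↦ le_trans ?_ (hfgh x y)
    · exact ((iSup_le fun x ↦ min_le_right _ _).trans_lt (ENNReal.natCast_lt_top m)).ne
    · exact ((iSup_le fun x ↦ min_le_right _ _).trans_lt (ENNReal.natCast_lt_top n)).ne
    · gcongr <;> exact min_le_left _ _
  rw [lintegral_eq_iSup_lintegral_min_natCast _ hf, lintegral_eq_iSup_lintegral_min_natCast _ hg,
    ← ENNReal.orderIsoRpow_apply a ha, ← ENNReal.orderIsoRpow_apply b hb, OrderIso.map_iSup,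
    OrderIso.map_iSup, ENNReal.iSup_mul]
  simp only [ENNReal.mul_iSup]
  exact iSup₂_le h_truncated

variable {E F : Type*} [AddCommGroup E] [Module ℝ E] [MeasurableSpace E]
  [AddCommGroup F] [Module ℝ F] [MeasurableSpace F] {μ : Measure E} {ν : Measure F}

namespace PrekopaLeindler

theorem prod [SFinite ν] (hμ : PrekopaLeindler a b μ) (hν : PrekopaLeindler a b ν) :
    PrekopaLeindler a b (μ.prod ν) := by
  intro f g h hf hg hh hfgh
  rw [lintegral_prod _ hf.aemeasurable, lintegral_prod _ hg.aemeasurable,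
    lintegral_prod _ hh.aemeasurable]
  refine hμ _ _ _ hf.lintegral_prod_right' hg.lintegral_prod_right' hh.lintegral_prod_right' ?_
  intro x y
  exact hν _ _ _ (hf.comp measurable_prodMk_left) (hg.comp measurable_prodMk_left)
    (hh.comp measurable_prodMk_left) fun z w ↦ hfgh (x, z) (y, w)

theorem of_measurePreserving (hμ : PrekopaLeindler a b μ) (e : E →ₗ[ℝ] F)
    (he : MeasurePreserving e μ ν) : PrekopaLeindler a b ν := by
  intro f g h hf hg hh hfgh
  rw [← he.lintegral_comp hf, ← he.lintegral_comp hg, ← he.lintegral_comp hh]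
  refine hμ _ _ _ (hf.comp he.measurable) (hg.comp he.measurable) (hh.comp he.measurable) ?_
  intro x y
  simpa using hfgh (e x) (e y)

theorem smul (ha : 0 < a) (hb : 0 < b) (hab : a + b = 1) (hμ : PrekopaLeindler a b μ)
    (c : ℝ≥0∞) : PrekopaLeindler a b (c • μ) := by
  intro f g h hf hg hh hfgh
  simp only [lintegral_smul_measure, smul_eq_mul]
  calc (c * ∫⁻ x, f x ∂μ) ^ a * (c * ∫⁻ x, g x ∂μ) ^ b
      = c * ((∫⁻ x, f x ∂μ) ^ a * (∫⁻ x, g x ∂μ) ^ b) := by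
        rw [ennreal_mul_rpow_mul_mul_rpow ha.le hb.le, ennreal_rpow_mul_rpow_self ha hb hab]
    _ ≤ c * ∫⁻ x, h x ∂μ := by
        gcongr
        exact hμ f g h hf hg hh hfgh

theorem pi {n : ℕ} {E : Fin n → Type*} [∀ i, AddCommGroup (E i)] [∀ i, Module ℝ (E i)]
    [∀ i, MeasurableSpace (E i)] {μ : ∀ i, Measure (E i)} [∀ i, SigmaFinite (μ i)]
    (hμ : ∀ i, PrekopaLeindler a b (μ i)) : PrekopaLeindler a b (Measure.pi μ) := by
  induction n with
  | zero =>
    intro f g h _ _ _ hfgh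
    simpa [Measure.pi_of_empty μ 0] using hfgh 0 0
  | succ n ih =>
    have h_cons : ⇑(Fin.consLinearEquiv ℝ E).toLinearMap =
        (MeasurableEquiv.piFinSuccAbove E 0).symm :=
      congrArg DFunLike.coe (Fin.insertNthEquiv_zero E).symm
    refine ((hμ 0).prod (ih fun i ↦ hμ i.succ)).of_measurePreserving
      (Fin.consLinearEquiv ℝ E).toLinearMap ?_
    rw [h_cons]
    exact (measurePreserving_piFinSuccAbove μ 0).symm

end PrekopaLeindler

end PrekopaLeindler

section BrunnMinkowski

variable {E : Type*} [NormedAddCommGroup E] [NormedSpace ℝ E] [FiniteDimensional ℝ E]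
  [MeasurableSpace E] [BorelSpace E] (μ : Measure E) [μ.IsAddHaarMeasure] {a b : ℝ}

theorem prekopaLeindler_addHaar (ha : 0 < a) (hb : 0 < b) (hab : a + b = 1) :
    PrekopaLeindler a b μ := by
  let e : (Fin (finrank ℝ E) → ℝ) ≃L[ℝ] E := .ofFinrankEq (by simp)
  have h_map : PrekopaLeindler a b (volume.map e) :=
    (PrekopaLeindler.pi fun _ ↦ prekopaLeindler_real ha hb hab).of_measurePreserving
      e.toLinearEquiv.toLinearMap ⟨e.continuous.measurable, rfl⟩
  rw [Measure.isAddLeftInvariant_eq_smul μ (volume.map e)]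
  exact h_map.smul ha hb hab _

theorem measure_rpow_mul_measure_rpow_le_measure_add (ha : 0 < a) (hb : 0 < b) (hab : a + b = 1)
    {A B : Set E} (hA : NullMeasurableSet A μ) (hB : NullMeasurableSet B μ) :
    μ A ^ a * μ B ^ b ≤ μ (a • A + b • B) := by
  obtain ⟨A', hA', hA'_meas, hAA'⟩ := hA.exists_measurable_subset_ae_eq
  obtain ⟨B', hB', hB'_meas, hBB'⟩ := hB.exists_measurable_subset_ae_eq
  let C := toMeasurable μ (a • A + b • B)
  have h_indicator (x y : E) : A'.indicator (1 : E → ℝ≥0∞) x ^ a * B'.indicator 1 y ^ b ≤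
      C.indicator 1 (a • x + b • y) := by
    by_cases hx : x ∈ A'; swap
    · simp [hx, ha]
    by_cases hy : y ∈ B'; swap
    · simp [hy, hb]
    have hC : a • x + b • y ∈ C := subset_toMeasurable μ _ <|
      add_mem_add (smul_mem_smul_set (hA' hx)) (smul_mem_smul_set (hB' hy))
    simp [hx, hy, hC]
  have hC_meas : MeasurableSet C := measurableSet_toMeasurable μ _
  have h_pl := prekopaLeindler_addHaar μ ha hb hab _ _ _ (measurable_one.indicator hA'_meas)
    (measurable_one.indicator hB'_meas) (measurable_one.indicator hC_meas) h_indicator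
  rwa [lintegral_indicator_one hA'_meas, lintegral_indicator_one hB'_meas,
    lintegral_indicator_one hC_meas, measure_congr hAA', measure_congr hBB',
    measure_toMeasurable] at h_pl

end BrunnMinkowski

section Semicontinuity

variable {G : Type*} [AddGroup G] [TopologicalSpace G] [IsTopologicalAddGroup G]

theorem isOpen_setOf_subset_vadd {C V : Set G} (hC : IsCompact C) (hV : IsOpen V) :
    IsOpen {x : G | C ⊆ x +ᵥ V} := by
  have h_compl : {x : G | C ⊆ x +ᵥ V}ᶜ = C + -Vᶜ := by
    ext x
    simp only [mem_compl_iff, mem_ofPred_eq, not_subset, mem_vadd_set_iff_neg_vadd_mem,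
      vadd_eq_add]
    constructor
    · rintro ⟨c, hc, hcV⟩
      exact ⟨c, hc, -c + x, by simpa using hcV, by simp⟩
    · rintro ⟨c, hc, v, hv, rfl⟩
      exact ⟨c, hc, by simpa using hv⟩
  rw [← isClosed_compl_iff, h_compl]
  exact hV.isClosed_compl.neg.add_left_of_isCompact hC

variable [MeasurableSpace G] (μ : Measure G)

theorem upperSemicontinuous_measure_inter_vadd [μ.OuterRegular] {K L : Set G} (hK : IsCompact K)
    (hL : IsClosed L) : UpperSemicontinuous fun x : G ↦ μ (K ∩ (x +ᵥ L)) := by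
  intro x δ hx
  obtain ⟨U, hKU, hU, hUδ⟩ := exists_isOpen_lt_of_lt _ _ hx
  have h_iff (y : G) : K \ U ⊆ y +ᵥ Lᶜ ↔ K ∩ (y +ᵥ L) ⊆ U := by
    rw [vadd_set_compl, sdiff_subset_iff, inter_subset, union_comm]
  have h_nhds := (isOpen_setOf_subset_vadd (hK.diff hU) hL.isOpen_compl).mem_nhds ((h_iff x).2 hKU)
  filter_upwards [h_nhds] with y hy
  exact (measure_mono ((h_iff y).1 hy)).trans_lt hUδ

theorem lowerSemicontinuous_measure_inter_vadd [μ.Regular] {U V : Set G} (hU : IsOpen U)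
    (hV : IsOpen V) : LowerSemicontinuous fun x : G ↦ μ (U ∩ (x +ᵥ V)) := by
  intro x δ hx
  obtain ⟨C, hC, hC_compact, hδC⟩ := (hU.inter (hV.vadd x)).exists_lt_isCompact hx
  filter_upwards [(isOpen_setOf_subset_vadd hC_compact hV).mem_nhds (hC.trans inter_subset_right)]
    with y hy
  exact hδC.trans_le (measure_mono (subset_inter (hC.trans inter_subset_left) hy))

end Semicontinuity

section Homothety

variable {E : Type*} [AddCommGroup E] [Module ℝ E] {K : Set E} {c : E}

theorem image_homothety_eq_vadd_smul (K : Set E) (c : E) (τ : ℝ) :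
    AffineMap.homothety c τ '' K = (1 - τ) • c +ᵥ τ • K := by
  rw [← image_smul, ← image_vadd, image_image]
  refine image_congr fun z _ ↦ ?_
  simp only [AffineMap.homothety_apply, vsub_eq_sub, vadd_eq_add]
  module

theorem image_homothety_subset_image_homothety (hK : StarConvex ℝ c K) {s t : ℝ} (hs : 0 ≤ s)
    (hst : s ≤ t) : AffineMap.homothety c s '' K ⊆ AffineMap.homothety c t '' K := by
  rintro _ ⟨z, hz, rfl⟩
  rcases (hs.trans hst).eq_or_lt with rfl | ht
  · exact ⟨z, hz, by rw [hst.antisymm hs]⟩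
  refine ⟨AffineMap.homothety c (s / t) z, ?_, ?_⟩
  · rw [AffineMap.homothety_apply, vsub_eq_sub, vadd_eq_add, add_comm]
    exact hK.add_smul_sub_mem hz (by positivity) (div_le_one_of_le₀ hst ht.le)
  · rw [← AffineMap.homothety_mul_apply, mul_div_cancel₀ _ ht.ne']

end Homothety

section ConvolutionBody

/-- The convolution body of `K` and `L` at level `δ`: the translations `x` for which `K` meets
`x + L` in measure at least `δ`. The body `K(δ, τ)` is `convolutionBody volume K (τ • K) δ`. -/
def convolutionBody {G : Type*} [AddGroup G] [MeasurableSpace G] (μ : Measure G)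
    (K L : Set G) (δ : ℝ≥0∞) : Set G :=
  {x | δ ≤ μ (K ∩ (x +ᵥ L))}

theorem convolutionBody_smul_eq_setOf_image {E : Type*} [AddCommGroup E] [Module ℝ E]
    [MeasurableSpace E] (μ : Measure E) (K L : Set E) (τ : ℝ) (δ : ℝ≥0∞) :
    convolutionBody μ K (τ • L) δ = {x | δ ≤ μ (K ∩ (fun z ↦ x + τ • z) '' L)} := by
  simp only [convolutionBody, ← image_smul, ← image_vadd, image_image, vadd_eq_add]

theorem neg_convolutionBody {G : Type*} [AddCommGroup G] [MeasurableSpace G] [MeasurableNeg G]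
    (μ : Measure G) [μ.IsNegInvariant] (K L : Set G) (δ : ℝ≥0∞) :
    -convolutionBody μ K L δ = convolutionBody μ (-K) (-L) δ := by
  ext x
  have h_neg : -(K ∩ (-x +ᵥ L)) = -K ∩ (x +ᵥ -L) := by
    ext y
    simp [mem_vadd_set_iff_neg_vadd_mem, add_comm]
  rw [convolutionBody, convolutionBody, mem_neg, mem_ofPred_eq, mem_ofPred_eq, ← h_neg,
    Measure.measure_neg]

section AddGroup

variable {G : Type*} [AddGroup G] [MeasurableSpace G] (μ : Measure G) {K L : Set G} {δ : ℝ≥0∞}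

theorem convolutionBody_subset_sub (hδ : 0 < δ) : convolutionBody μ K L δ ⊆ K - L := by
  intro x hx
  obtain ⟨_, hz, w, hw, rfl⟩ := nonempty_of_measure_ne_zero (hδ.trans_le hx).ne'
  exact ⟨_, hz, w, hw, by simp⟩

theorem isCompact_convolutionBody [TopologicalSpace G] [IsTopologicalAddGroup G] [T2Space G]
    [μ.OuterRegular] (hK : IsCompact K) (hL : IsCompact L) (hδ : 0 < δ) :
    IsCompact (convolutionBody μ K L δ) :=
  (sub_eq_add_neg K L ▸ hK.add hL.neg).of_isClosed_subset
    ((upperSemicontinuous_measure_inter_vadd μ hK hL.isClosed).isClosed_preimage δ)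
    (convolutionBody_subset_sub μ hδ)

end AddGroup

variable {E : Type*} [NormedAddCommGroup E] [NormedSpace ℝ E] [FiniteDimensional ℝ E]
  [MeasurableSpace E] [BorelSpace E] (μ : Measure E) [μ.IsAddHaarMeasure] {K L : Set E}
  {δ : ℝ≥0∞} {τ : ℝ} {c : E}

theorem convex_convolutionBody (hK : Convex ℝ K) (hL : Convex ℝ L) :
    Convex ℝ (convolutionBody μ K L δ) := by
  rw [convex_iff_forall_pos]
  intro x hx y hy a b ha hb hab
  have h_null (z : E) : NullMeasurableSet (K ∩ (z +ᵥ L)) μ :=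
    (hK.inter (hL.vadd z)).nullMeasurableSet μ
  have h_concave : a • (K ∩ (x +ᵥ L)) + b • (K ∩ (y +ᵥ L)) ⊆ K ∩ ((a • x + b • y) +ᵥ L) := by
    rintro _ ⟨_, ⟨_, ⟨hp, z, hz, rfl⟩, rfl⟩, _, ⟨_, ⟨hq, w, hw, rfl⟩, rfl⟩, rfl⟩
    refine ⟨hK hp hq ha.le hb.le hab, a • z + b • w, hL hz hw ha.le hb.le hab, ?_⟩
    simp only [vadd_eq_add]
    module
  calc δ = δ ^ a * δ ^ b := (ennreal_rpow_mul_rpow_self ha hb hab δ).symm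
    _ ≤ μ (K ∩ (x +ᵥ L)) ^ a * μ (K ∩ (y +ᵥ L)) ^ b := by gcongr <;> assumption
    _ ≤ μ (a • (K ∩ (x +ᵥ L)) + b • (K ∩ (y +ᵥ L))) :=
      measure_rpow_mul_measure_rpow_le_measure_add μ ha hb hab (h_null x) (h_null y)
    _ ≤ μ (K ∩ ((a • x + b • y) +ᵥ L)) := measure_mono h_concave

theorem min_one_pow_mul_measure_le_measure_inter_vadd_smul (hK : StarConvex ℝ c K) (hτ : 0 ≤ τ) :
    ENNReal.ofReal (min 1 (τ ^ finrank ℝ E)) * μ K ≤ μ (K ∩ ((1 - τ) • c +ᵥ τ • K)) := by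
  have hs : 0 ≤ min 1 τ := le_min zero_le_one hτ
  have h_pow : min 1 (τ ^ finrank ℝ E) = min 1 τ ^ finrank ℝ E := by
    simpa using (pow_left_monotoneOn.map_min (mem_Ici.2 zero_le_one) (mem_Ici.2 hτ)).symm
  have h_subset : AffineMap.homothety c (min 1 τ) '' K ⊆ K ∩ ((1 - τ) • c +ᵥ τ • K) := by
    rw [← image_homothety_eq_vadd_smul]
    refine subset_inter ?_ (image_homothety_subset_image_homothety hK hs (min_le_right 1 τ))
    simpa using image_homothety_subset_image_homothety hK hs (min_le_left 1 τ)
  calc ENNReal.ofReal (min 1 (τ ^ finrank ℝ E)) * μ K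
      = μ (AffineMap.homothety c (min 1 τ) '' K) := by
        rw [Measure.addHaar_image_homothety, h_pow, abs_of_nonneg (by positivity)]
    _ ≤ μ (K ∩ ((1 - τ) • c +ᵥ τ • K)) := measure_mono h_subset

theorem interior_convolutionBody_smul_nonempty (hK : Convex ℝ K) (hτ : 0 < τ)
    (hδ : δ < ENNReal.ofReal (min 1 (τ ^ finrank ℝ E)) * μ K) :
    (interior (convolutionBody μ K (τ • K) δ)).Nonempty := by
  rw [← measure_interior_of_null_frontier (hK.addHaar_frontier μ)] at hδ
  obtain ⟨c, hc⟩ : (interior K).Nonempty :=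
    nonempty_of_measure_ne_zero (right_ne_zero_of_mul (bot_le.trans_lt hδ).ne')
  have h_open : IsOpen {x | δ < μ (interior K ∩ (x +ᵥ τ • interior K))} :=
    (lowerSemicontinuous_measure_inter_vadd μ isOpen_interior
      (isOpen_interior.smul₀ hτ.ne')).isOpen_preimage δ
  have h_subset : {x | δ < μ (interior K ∩ (x +ᵥ τ • interior K))} ⊆
      convolutionBody μ K (τ • K) δ := fun x hx ↦
    (le_of_lt hx).trans <| measure_mono <| inter_subset_inter interior_subset <|
      vadd_set_mono (smul_set_mono interior_subset)
  exact ⟨(1 - τ) • c, interior_maximal h_subset h_open <|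
    hδ.trans_le (min_one_pow_mul_measure_le_measure_inter_vadd_smul μ (hK.interior hc) hτ.le)⟩

theorem stmt_1_general (hK_compact : IsCompact K) (hK_convex : Convex ℝ K) (hτ : 0 < τ)
    (hδ₀ : 0 < δ) (hδ : δ < ENNReal.ofReal (min 1 (τ ^ finrank ℝ E)) * μ K) :
    IsCompact (convolutionBody μ K (τ • K) δ) ∧ Convex ℝ (convolutionBody μ K (τ • K) δ) ∧
      (interior (convolutionBody μ K (τ • K) δ)).Nonempty ∧
      (K = -K → convolutionBody μ K (τ • K) δ = -convolutionBody μ K (τ • K) δ) := by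
  refine ⟨isCompact_convolutionBody μ hK_compact (hK_compact.smul τ) hδ₀,
    convex_convolutionBody μ hK_convex (hK_convex.smul τ),
    interior_convolutionBody_smul_nonempty μ hK_convex hτ hδ, fun hK_symm ↦ ?_⟩
  rw [neg_convolutionBody, ← smul_set_neg, ← hK_symm]

end ConvolutionBody

/-- The convolution body `K(δ,τ) = {x : vol (K ∩ (x + τK)) ≥ δ}` is a convex body,
and it is symmetric whenever `K` is. -/
theorem stmt_1 (n : ℕ) (K : Set (EuclideanSpace ℝ (Fin n)))
    (hKcomp : IsCompact K) (hKconv : Convex ℝ K) (hKint : (interior K).Nonempty)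
    (h0 : 0 ∈ interior K)
    (τ : ℝ) (hτ : 0 < τ)
    (δ : ENNReal) (hδ0 : 0 < δ)
    (hδ : δ < ENNReal.ofReal (min 1 (τ ^ n)) * volume K) :
    IsCompact {x : EuclideanSpace ℝ (Fin n) | δ ≤ volume (K ∩ (fun z => x + τ • z) '' K)} ∧
    Convex ℝ {x : EuclideanSpace ℝ (Fin n) | δ ≤ volume (K ∩ (fun z => x + τ • z) '' K)} ∧
    (interior {x : EuclideanSpace ℝ (Fin n) |
        δ ≤ volume (K ∩ (fun z => x + τ • z) '' K)}).Nonempty ∧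
    (K = -K → {x : EuclideanSpace ℝ (Fin n) | δ ≤ volume (K ∩ (fun z => x + τ • z) '' K)} =
      -{x : EuclideanSpace ℝ (Fin n) | δ ≤ volume (K ∩ (fun z => x + τ • z) '' K)}) := by
  simpa only [convolutionBody_smul_eq_setOf_image] using stmt_1_general volume hKcomp hKconv hτ hδ0
    (by rwa [finrank_euclideanSpace_fin])
end

section
/- Let K be a symmetric convex body in ℝⁿ such that for some τ > 0 the function x ↦ vol(K ∩ (x + τK)) depends only on ‖x‖_K. Then K is strictly convex. -/
open MeasureTheory Set
open scoped Pointwise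

/-!
After renorming, `K` is the closed unit ball `B` of a finite-dimensional normed space, and
`L x = B ∩ (x + τ B)` is concave in `x`: the midpoints of `L x` and `L y` lie in `L (midpoint x y)`.
Given a unit vector `c`, the ball has an extreme point `a` in a face containing `c`, so `a`, `c` and
their midpoint are all unit vectors. As `ρ` increases to `1`, the set `L (ρ (1 + τ) a)` shrinks to
`{a}` because `a` is extreme. If `c` were not extreme, then `L (ρ (1 + τ) c)` would contain a
segment of length bounded below. The averages of `L (ρ (1 + τ) a)` with more than `2 ^ dim` points
of this segment are disjoint, and they all lie in the set `L` at the midpoint, whose volume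
therefore exceeds that of `L (ρ (1 + τ) a)` although the two centres have the same norm.
-/

open Metric Module
open scoped Topology

section Averaging

variable {E : Type*} [NormedAddCommGroup E] [NormedSpace ℝ E]

theorem disjoint_image_midpoint_of_subset_ball {A : Set E} {a p q : E} {δ : ℝ}
    (hA : A ⊆ ball a δ) (hpq : 2 * δ ≤ dist p q) :
    Disjoint (midpoint ℝ p '' A) (midpoint ℝ q '' A) := by
  rw [Set.disjoint_left]
  rintro _ ⟨u, hu, rfl⟩ ⟨v, hv, h⟩
  have hdist : dist p q = dist u v := by
    rw [dist_comm, dist_eq_norm_vsub E q p, (midpoint_eq_midpoint_iff_vsub_eq_vsub ℝ).1 h,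
      dist_eq_norm_vsub E u v]
  have hu' : dist u a < δ := hA hu
  have hv' : dist v a < δ := hA hv
  linarith [dist_triangle_right u v a]

theorem image_midpoint_eq_smul_vadd (p : E) (A : Set E) :
    midpoint ℝ p '' A = (⅟2 : ℝ) • (p +ᵥ A) := by
  rw [← image_vadd, ← image_smul, image_image]
  exact image_congr fun u _ => midpoint_eq_smul_add ℝ p u

variable [FiniteDimensional ℝ E] [MeasurableSpace E] [BorelSpace E] (μ : Measure E)
  [μ.IsAddHaarMeasure]

theorem measure_image_midpoint (p : E) (A : Set E) :
    μ (midpoint ℝ p '' A) = μ A / 2 ^ finrank ℝ E := by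
  rw [image_midpoint_eq_smul_vadd, Measure.addHaar_smul, measure_vadd, mul_comm, div_eq_mul_inv,
    invOf_eq_inv, inv_pow, abs_of_pos (by positivity), ENNReal.ofReal_inv_of_pos (by positivity),
    ENNReal.ofReal_pow zero_le_two, ENNReal.ofReal_ofNat]

theorem measure_lt_measure_iUnion_image_midpoint {A : Set E} (hA : MeasurableSet A)
    (hA₀ : μ A ≠ 0) (hA_top : μ A ≠ ⊤) {ι : Type*} [Fintype ι] {p : ι → E}
    (hp : Pairwise fun i j => Disjoint (midpoint ℝ (p i) '' A) (midpoint ℝ (p j) '' A))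
    (hι : 2 ^ finrank ℝ E < Fintype.card ι) :
    μ A < μ (⋃ i, midpoint ℝ (p i) '' A) := by
  have hmeas (i : ι) : MeasurableSet (midpoint ℝ (p i) '' A) := by
    rw [image_midpoint_eq_smul_vadd]
    exact (hA.const_vadd (p i)).const_smul₀ _
  have hpow : (2 ^ finrank ℝ E : ENNReal) ≠ 0 := by positivity
  have hpow' : (2 ^ finrank ℝ E : ENNReal) ≠ ⊤ := by finiteness
  calc μ A = 2 ^ finrank ℝ E * (μ A / 2 ^ finrank ℝ E) := (ENNReal.mul_div_cancel hpow hpow').symm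
    _ < Fintype.card ι * (μ A / 2 ^ finrank ℝ E) := by
      refine (ENNReal.mul_lt_mul_iff_left ?_ ?_).2 (mod_cast hι)
      · exact ENNReal.div_ne_zero.2 ⟨hA₀, hpow'⟩
      · finiteness
    _ = μ (⋃ i, midpoint ℝ (p i) '' A) := by
      rw [measure_iUnion hp hmeas, tsum_fintype]
      simp only [measure_image_midpoint, Finset.sum_const, Finset.card_univ, nsmul_eq_mul]

theorem measure_lt_measure_of_forall_midpoint_mem {A M : Set E} (hA : MeasurableSet A)
    (hA₀ : μ A ≠ 0) (hA_top : μ A ≠ ⊤) {a p q : E} {δ : ℝ} (hball : A ⊆ ball a δ)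
    (hpq : 2 ^ (finrank ℝ E + 1) * δ ≤ dist p q)
    (hM : ∀ v ∈ segment ℝ p q, ∀ u ∈ A, midpoint ℝ v u ∈ M) : μ A < μ M := by
  set N : ℕ := 2 ^ finrank ℝ E with hN
  let v (i : Fin (N + 1)) : E := AffineMap.lineMap p q ((i : ℝ) / N)
  have hN₀ : (0 : ℝ) < N := by positivity
  have hv_mem (i : Fin (N + 1)) : v i ∈ segment ℝ p q := by
    rw [segment_eq_image_lineMap]
    refine mem_image_of_mem _ ⟨by positivity, (div_le_one hN₀).2 ?_⟩
    exact_mod_cast Nat.le_of_lt_succ i.2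
  have hv_dist (i j : Fin (N + 1)) (hij : i ≠ j) : 2 * δ ≤ dist (v i) (v j) := by
    have hij' : 1 ≤ |(i : ℝ) - j| := by
      have : ((i : ℕ) : ℤ) ≠ (j : ℕ) := Nat.cast_injective.ne (Fin.val_injective.ne hij)
      exact_mod_cast Int.one_le_abs (sub_ne_zero.2 this)
    calc 2 * δ = 2 ^ (finrank ℝ E + 1) * δ / N := by rw [hN]; push_cast; field_simp; ring
      _ ≤ 1 * dist p q / N := by rw [one_mul]; gcongr
      _ ≤ |(i : ℝ) - j| * dist p q / N := by gcongr
      _ = dist (v i) (v j) := by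
        rw [dist_lineMap_lineMap, Real.dist_eq, ← sub_div, abs_div, abs_of_pos hN₀]
        ring
  refine (measure_lt_measure_iUnion_image_midpoint μ hA hA₀ hA_top
    (fun i j hij => disjoint_image_midpoint_of_subset_ball hball (hv_dist i j hij)) ?_).trans_le
    (measure_mono (iUnion_subset fun i => ?_))
  · rw [Fintype.card_fin]
    exact N.lt_succ_self
  · rintro _ ⟨u, hu, rfl⟩
    exact hM _ (hv_mem i) u hu

end Averaging

theorem eventually_inter_closedBall_subset {X : Type*} [PseudoMetricSpace X] {K U : Set X}
    (hK : IsCompact K) (hU : IsOpen U) {x₀ : X} {τ : ℝ} (h : K ∩ closedBall x₀ τ ⊆ U) :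
    ∀ᶠ x in 𝓝 x₀, K ∩ closedBall x τ ⊆ U := by
  have hfar : ∀ᶠ x in 𝓝 x₀, ∀ z ∈ K \ U, τ < dist z x := by
    refine (hK.diff hU).eventually_forall_of_forall_eventually fun z hz => ?_
    refine (continuous_snd.dist continuous_fst).continuousAt.eventually_const_lt ?_
    by_contra! hle
    exact hz.2 (h ⟨hz.1, hle⟩)
  filter_upwards [hfar] with x hx z hz
  by_contra hzU
  exact (hx z ⟨hz.1, hzU⟩).not_ge hz.2

section UnitBall

variable {E : Type*} [NormedAddCommGroup E] [NormedSpace ℝ E]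

theorem exists_mem_extremePoints_norm_midpoint_eq_one [ProperSpace E] {c : E} (hc : ‖c‖ = 1) :
    ∃ a ∈ (closedBall (0 : E) 1).extremePoints ℝ, ‖a‖ = 1 ∧ ‖midpoint ℝ a c‖ = 1 := by
  obtain ⟨g, hg, hgc⟩ := exists_dual_vector'' ℝ c
  have hgc : g c = 1 := by simpa [hc] using hgc
  have hg_le (z : E) : g z ≤ ‖z‖ := by
    simpa using (le_abs_self _).trans (g.le_of_opNorm_le hg z)
  have hnorm {z : E} (hz : z ∈ closedBall (0 : E) 1) (hgz : g z = 1) : ‖z‖ = 1 :=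
    le_antisymm (mem_closedBall_zero_iff.1 hz) (hgz ▸ hg_le z)
  set F := g.toExposed (closedBall (0 : E) 1)
  have hF : IsExposed ℝ (closedBall 0 1) F := ContinuousLinearMap.toExposed.isExposed
  have hcF : c ∈ F :=
    ⟨by simp [hc], fun y hy => hgc ▸ (hg_le y).trans (mem_closedBall_zero_iff.1 hy)⟩
  obtain ⟨a, ha⟩ := (hF.isCompact (isCompact_closedBall 0 1)).extremePoints_nonempty ⟨c, hcF⟩
  obtain ⟨haB, ha_max⟩ : a ∈ F := ha.1
  have hga : g a = 1 :=
    le_antisymm ((hg_le a).trans (mem_closedBall_zero_iff.1 haB)) (hgc ▸ ha_max c hcF.1)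
  refine ⟨a, hF.isExtreme.extremePoints_subset_extremePoints ha, hnorm haB hga,
    hnorm ((convex_closedBall 0 1).midpoint_mem haB hcF.1) ?_⟩
  rw [midpoint_eq_smul_add, map_smul, map_add, hga, hgc]
  norm_num

theorem strictConvexSpace_of_sphere_subset_extremePoints
    (h : sphere (0 : E) 1 ⊆ (closedBall (0 : E) 1).extremePoints ℝ) : StrictConvexSpace ℝ E := by
  refine .of_norm_add_ne_two fun x y hx hy hne hxy => hne ?_
  have hmid : ‖midpoint ℝ x y‖ = 1 := by
    rw [midpoint_eq_smul_add, norm_smul, hxy]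
    norm_num
  obtain ⟨hx', hy'⟩ := (mem_extremePoints.1 (h (mem_sphere_zero_iff_norm.2 hmid))).2
    x (by simp [hx]) y (by simp [hy]) (midpoint_mem_openSegment ..)
  exact hx'.trans hy'.symm

theorem image_add_smul_unitClosedBall {τ : ℝ} (hτ : 0 ≤ τ) (x : E) :
    (fun z => x + τ • z) '' closedBall 0 1 = closedBall x τ := by
  calc (fun z => x + τ • z) '' closedBall 0 1 = x +ᵥ τ • closedBall (0 : E) 1 := by
        rw [← image_smul, ← image_vadd, image_image]
        rfl
    _ = closedBall x τ := by
        rw [smul_unitClosedBall_of_nonneg hτ, vadd_closedBall, vadd_eq_add, add_zero]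

end UnitBall

/-- The intersection `B ∩ (x + τ B)`, where `B` is the closed unit ball. -/
def lens {E : Type*} [NormedAddCommGroup E] (τ : ℝ) (x : E) : Set E :=
  closedBall 0 1 ∩ closedBall x τ

theorem isCompact_lens {E : Type*} [NormedAddCommGroup E] [ProperSpace E] {τ : ℝ} {x : E} :
    IsCompact (lens τ x) :=
  (isCompact_closedBall _ _).inter (isCompact_closedBall _ _)

section Lens

variable {E : Type*} [NormedAddCommGroup E] [NormedSpace ℝ E] {τ : ℝ} {x y c : E}

theorem convex_lens : Convex ℝ (lens τ x) :=
  (convex_closedBall _ _).inter (convex_closedBall _ _)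

theorem midpoint_mem_lens {u v : E} (hu : u ∈ lens τ x) (hv : v ∈ lens τ y) :
    midpoint ℝ u v ∈ lens τ (midpoint ℝ x y) := by
  refine ⟨(convex_closedBall 0 1).midpoint_mem hu.1 hv.1, ?_⟩
  have hux : dist u x ≤ τ := hu.2
  have hvy : dist v y ≤ τ := hv.2
  rw [mem_closedBall]
  linarith [dist_midpoint_midpoint_le u v x y]

theorem smul_mem_lens {ρ : ℝ} (hρ : ‖ρ‖ ≤ 1) {z : E} (hz : z ∈ lens τ x) :
    ρ • z ∈ lens τ (ρ • x) := by
  constructor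
  · rw [mem_closedBall_zero_iff, norm_smul]
    exact mul_le_one₀ hρ (norm_nonneg z) (mem_closedBall_zero_iff.1 hz.1)
  · rw [mem_closedBall, dist_smul₀]
    exact (mul_le_of_le_one_left dist_nonneg hρ).trans hz.2

theorem measure_lens_pos [MeasurableSpace E] (μ : Measure E) [μ.IsOpenPosMeasure]
    (hτ : 0 < τ) (hx : ‖x‖ < 1 + τ) : 0 < μ (lens τ x) := by
  obtain ⟨z, hz, hzx⟩ : ∃ z, dist 0 z < 1 ∧ dist z x < τ :=
    exists_dist_lt_lt one_pos hτ (by rwa [dist_zero_left, add_comm])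
  rw [dist_comm] at hz
  exact ((isOpen_ball.inter isOpen_ball).measure_pos μ ⟨z, hz, hzx⟩).trans_le
    (measure_mono (inter_subset_inter ball_subset_closedBall ball_subset_closedBall))

theorem mem_lens_iff_exists_add_smul_eq (hτ : 0 ≤ τ) {z : E} :
    z ∈ lens τ x ↔ z ∈ closedBall 0 1 ∧ ∃ w ∈ closedBall 0 1, z + τ • w = x := by
  rw [lens, mem_inter_iff, mem_closedBall_comm (y := x), ← image_add_smul_unitClosedBall hτ]
  rfl

theorem mem_lens_one_add_smul_self (hτ : 0 ≤ τ) (hc : c ∈ closedBall 0 1) :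
    c ∈ lens τ ((1 + τ) • c) :=
  (mem_lens_iff_exists_add_smul_eq hτ).2 ⟨hc, c, hc, by rw [add_smul, one_smul]⟩

theorem mem_extremePoints_closedBall_of_lens_eq_singleton (hτ : 0 < τ)
    (h : lens τ ((1 + τ) • c) = {c}) : c ∈ (closedBall (0 : E) 1).extremePoints ℝ := by
  have hc : c ∈ lens τ ((1 + τ) • c) := h ▸ mem_singleton c
  refine mem_extremePoints_iff_left.2 ⟨hc.1, fun x hx y hy ⟨s, t, hs, ht, hst, hxy⟩ => ?_⟩
  -- The largest perturbation for which `c + θ (x - y)` and `c - (θ / τ) (x - y)` are both convex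
  -- combinations of `x` and `y`.
  set θ : ℝ := min t (τ * s)
  have hθ : 0 < θ := lt_min ht (mul_pos hτ hs)
  have hθs : θ / τ ≤ s := (div_le_iff₀' hτ).2 (min_le_right _ _)
  have hz : (s + θ) • x + (t - θ) • y ∈ closedBall (0 : E) 1 :=
    convex_closedBall 0 1 hx hy (by positivity) (sub_nonneg.2 (min_le_left _ _)) (by linarith)
  have hw : (s - θ / τ) • x + (t + θ / τ) • y ∈ closedBall (0 : E) 1 :=
    convex_closedBall 0 1 hx hy (sub_nonneg.2 hθs) (by positivity) (by linarith)
  have hz_lens : (s + θ) • x + (t - θ) • y ∈ lens τ ((1 + τ) • c) := by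
    refine (mem_lens_iff_exists_add_smul_eq hτ.le).2 ⟨hz, _, hw, ?_⟩
    rw [← hxy]
    match_scalars <;> field_simp <;> ring
  have hzc : (s + θ) • x + (t - θ) • y = c := by rwa [h] at hz_lens
  have hxy_eq : x = y := by
    refine sub_eq_zero.1 ((smul_eq_zero_iff_right hθ.ne').1 ?_)
    calc θ • (x - y) = (s + θ) • x + (t - θ) • y - (s • x + t • y) := by module
      _ = 0 := by rw [hzc, hxy, sub_self]
  rw [← hxy, ← hxy_eq, ← add_smul, hst, one_smul]

theorem lens_eq_singleton_of_mem_extremePoints_closedBall (hτ : 0 < τ)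
    (hc : c ∈ (closedBall (0 : E) 1).extremePoints ℝ) : lens τ ((1 + τ) • c) = {c} := by
  refine eq_singleton_iff_unique_mem.2 ⟨mem_lens_one_add_smul_self hτ.le hc.1, fun z hz => ?_⟩
  obtain ⟨hz, w, hw, hzw⟩ := (mem_lens_iff_exists_add_smul_eq hτ.le).1 hz
  refine (mem_extremePoints_iff_left.1 hc).2 z hz w hw
    ⟨1 / (1 + τ), τ / (1 + τ), by positivity, by positivity, by field_simp, ?_⟩
  calc (1 / (1 + τ)) • z + (τ / (1 + τ)) • w = (1 / (1 + τ)) • (z + τ • w) := by module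
    _ = c := by rw [hzw, one_div, inv_smul_smul₀ (by positivity)]

theorem exists_measure_lens_lt_measure_lens_midpoint [FiniteDimensional ℝ E] [MeasurableSpace E]
    [BorelSpace E] (μ : Measure E) [μ.IsAddHaarMeasure] {a : E} (hτ : 0 < τ) (hx : ‖x‖ ≤ 1 + τ)
    (hxa : lens τ x ⊆ {a}) (hy : (lens τ y).Nontrivial) :
    ∃ ρ : ℝ, μ (lens τ (ρ • x)) < μ (lens τ (ρ • midpoint ℝ x y)) := by
  obtain ⟨p, hp, q, hq, hpq⟩ := hy
  set δ : ℝ := dist p q / 2 / 2 ^ (finrank ℝ E + 1) with hδ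
  have hδ₀ : 0 < δ := by positivity [dist_pos.2 hpq]
  have hball : ∀ᶠ ρ : ℝ in 𝓝 1, lens τ (ρ • x) ⊆ ball a δ := by
    have hx_ball : closedBall 0 1 ∩ closedBall ((1 : ℝ) • x) τ ⊆ ball a δ := by
      rw [one_smul]
      exact hxa.trans (singleton_subset_iff.2 (mem_ball_self hδ₀))
    have hcont : ContinuousAt (fun ρ : ℝ => ρ • x) 1 := by fun_prop
    exact hcont.eventually
      (eventually_inter_closedBall_subset (isCompact_closedBall 0 1) isOpen_ball hx_ball)
  obtain ⟨ρ, hball, hρ, hρ1⟩ : ∃ ρ : ℝ, lens τ (ρ • x) ⊆ ball a δ ∧ ρ ∈ Ioo (1 / 2) 1 :=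
    ((hball.filter_mono nhdsWithin_le_nhds).and (Ioo_mem_nhdsLT (by norm_num))).exists
  have hρ₀ : ‖ρ‖ = ρ := Real.norm_of_nonneg (by linarith)
  refine ⟨ρ, measure_lt_measure_of_forall_midpoint_mem μ isCompact_lens.measurableSet
    (measure_lens_pos μ hτ ?_).ne' isCompact_lens.measure_ne_top hball (p := ρ • p) (q := ρ • q)
    ?_ fun v hv u hu => ?_⟩
  · rw [norm_smul, hρ₀]
    nlinarith
  · rw [dist_smul₀, hρ₀, hδ, mul_div_cancel₀ _ (by positivity)]
    nlinarith [dist_nonneg (x := p) (y := q)]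
  · have hv' : v ∈ lens τ (ρ • y) :=
      convex_lens.segment_subset (smul_mem_lens (by linarith) hp)
        (smul_mem_lens (by linarith) hq) hv
    have hmid : ρ • midpoint ℝ x y = midpoint ℝ (ρ • y) (ρ • x) := by
      rw [midpoint_comm, midpoint_eq_smul_add, midpoint_eq_smul_add, smul_comm, smul_add]
    rw [hmid]
    exact midpoint_mem_lens hv' hu

theorem mem_extremePoints_closedBall_of_measure_lens_eq [FiniteDimensional ℝ E]
    [MeasurableSpace E] [BorelSpace E] (μ : Measure E) [μ.IsAddHaarMeasure] (hτ : 0 < τ)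
    (hμ : ∀ x y : E, ‖x‖ = ‖y‖ → μ (lens τ x) = μ (lens τ y)) (hc : ‖c‖ = 1) :
    c ∈ (closedBall (0 : E) 1).extremePoints ℝ := by
  obtain ⟨a, ha, hna, hmid⟩ := exists_mem_extremePoints_norm_midpoint_eq_one hc
  by_contra hc_ext
  have hc_lens : c ∈ lens τ ((1 + τ) • c) :=
    mem_lens_one_add_smul_self hτ.le (mem_closedBall_zero_iff.2 hc.le)
  have hc_nontrivial : (lens τ ((1 + τ) • c)).Nontrivial :=
    (nontrivial_iff_ne_singleton hc_lens).2
      (hc_ext <| mem_extremePoints_closedBall_of_lens_eq_singleton hτ ·)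
  obtain ⟨ρ, hρ⟩ := exists_measure_lens_lt_measure_lens_midpoint μ hτ
    (by rw [norm_smul, hna, mul_one, Real.norm_of_nonneg (by positivity)])
    (lens_eq_singleton_of_mem_extremePoints_closedBall hτ ha).subset hc_nontrivial
  refine hρ.ne (hμ _ _ ?_)
  have hmid_smul : midpoint ℝ ((1 + τ) • a) ((1 + τ) • c) = (1 + τ) • midpoint ℝ a c := by
    rw [midpoint_eq_smul_add, midpoint_eq_smul_add, ← smul_add, smul_comm]
  rw [hmid_smul, norm_smul, norm_smul, norm_smul, norm_smul, hna, hmid]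

theorem strictConvexSpace_of_measure_lens_eq [FiniteDimensional ℝ E] [MeasurableSpace E]
    [BorelSpace E] (μ : Measure E) [μ.IsAddHaarMeasure] (hτ : 0 < τ)
    (hμ : ∀ x y : E, ‖x‖ = ‖y‖ → μ (lens τ x) = μ (lens τ y)) : StrictConvexSpace ℝ E :=
  strictConvexSpace_of_sphere_subset_extremePoints fun _ hc =>
    mem_extremePoints_closedBall_of_measure_lens_eq μ hτ hμ (mem_sphere_zero_iff_norm.1 hc)

end Lens

section Renorming

variable {E : Type*} [AddCommGroup E] [Module ℝ E] [TopologicalSpace E] [ContinuousSMul ℝ E]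
  {K : Set E}

theorem normedSpaceCore_gauge [T1Space E] (hbal : Balanced ℝ K) (hconv : Convex ℝ K)
    (h₀ : K ∈ 𝓝 0) (hbdd : Bornology.IsVonNBounded ℝ K) :
    letI : Norm E := ⟨gauge K⟩
    NormedSpace.Core ℝ E :=
  letI : Norm E := ⟨gauge K⟩
  { norm_nonneg := gauge_nonneg
    norm_smul := gauge_smul hbal
    norm_triangle := gauge_add_le hconv (absorbent_nhds_zero h₀)
    norm_eq_zero_iff := fun _ => gauge_eq_zero (absorbent_nhds_zero h₀) hbdd }

variable [IsTopologicalAddGroup E]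

theorem mem_nhds_zero_of_interior_nonempty (hconv : Convex ℝ K) (hne : (interior K).Nonempty)
    (hsymm : K = -K) : K ∈ 𝓝 0 := by
  obtain ⟨x, hx⟩ := hne
  have hneg : -x ∈ K := by
    rw [hsymm, neg_mem_neg]
    exact interior_subset hx
  rw [← mem_interior_iff_mem_nhds]
  have hmid := hconv.combo_interior_self_mem_interior hx hneg (a := 1 / 2) (b := 1 / 2)
    (by norm_num) (by norm_num) (by norm_num)
  simpa using hmid

variable [T1Space E]

/-- The gauge of `K`, as a norm inducing the given topology. The topology is kept definitionally,
so that Borel and Haar measure instances carry over. -/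
noncomputable abbrev gaugeNormedAddCommGroup (hbal : Balanced ℝ K) (hconv : Convex ℝ K)
    (h₀ : K ∈ 𝓝 0) (hbdd : Bornology.IsVonNBounded ℝ K) : NormedAddCommGroup E :=
  letI : Norm E := ⟨gauge K⟩
  .ofCoreReplaceTopology (normedSpaceCore_gauge hbal hconv h₀ hbdd) <| by
    let := SeminormedAddCommGroup.ofCore (normedSpaceCore_gauge hbal hconv h₀ hbdd).toCore
    refine IsTopologicalAddGroup.ext inferInstance inferInstance ?_
    rw [← comap_gauge_nhds_zero hbdd h₀]
    exact comap_norm_nhds_zero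

theorem stmt_4_general [MeasurableSpace E] [BorelSpace E] (μ : Measure E) [μ.IsAddHaarMeasure]
    (hcomp : IsCompact K) (hconv : Convex ℝ K) (hint : (interior K).Nonempty) (hsymm : K = -K)
    {τ : ℝ} (hτ : 0 < τ)
    (hμ : ∀ x y : E, gauge K x = gauge K y →
      μ (K ∩ (fun z => x + τ • z) '' K) = μ (K ∩ (fun z => y + τ • z) '' K)) :
    StrictConvex ℝ K := by
  have hbal : Balanced ℝ K :=
    (balanced_iff_neg_mem hconv).2 fun x hx => by rwa [hsymm, neg_mem_neg]
  have h₀ : K ∈ 𝓝 0 := mem_nhds_zero_of_interior_nonempty hconv hint hsymm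
  have hbdd := hcomp.isVonNBounded ℝ
  let : NormedAddCommGroup E := gaugeNormedAddCommGroup hbal hconv h₀ hbdd
  let : NormedSpace ℝ E := .ofCore (normedSpaceCore_gauge hbal hconv h₀ hbdd)
  have hball : closedBall 0 1 = K := by
    ext x
    rw [mem_closedBall_zero_iff, ← hcomp.isClosed.closure_eq]
    exact gauge_le_one_iff_mem_closure hconv h₀
  have : FiniteDimensional ℝ E := .of_isCompact_closedBall₀ ℝ one_pos (by rwa [hball])
  have : StrictConvexSpace ℝ E := by
    refine strictConvexSpace_of_measure_lens_eq μ hτ fun x y hxy => ?_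
    simp only [lens, ← image_add_smul_unitClosedBall hτ.le, hball]
    exact hμ x y hxy
  exact hball ▸ strictConvex_closedBall ℝ 0 1

end Renorming

/-- If for some `τ > 0` the volume `vol (K ∩ (x + τK))` depends only on `‖x‖_K`, then the
symmetric convex body `K` is strictly convex. -/
theorem stmt_4 (n : ℕ) (K : Set (EuclideanSpace ℝ (Fin n)))
    (hKcomp : IsCompact K) (hKconv : Convex ℝ K) (hKint : (interior K).Nonempty)
    (hKsymm : K = -K)
    (τ : ℝ) (hτ : 0 < τ)
    (hF : ∀ x y : EuclideanSpace ℝ (Fin n), gauge K x = gauge K y →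
      volume (K ∩ (fun z => x + τ • z) '' K) = volume (K ∩ (fun z => y + τ • z) '' K)) :
    StrictConvex ℝ K :=
  stmt_4_general volume hKcomp hKconv hKint hKsymm hτ hF
end
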